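/- arXiv:1301.5206 — 2 statements merged into one kernel-verified Lean document; each statement's English description precedes it below -/
import Mathlib

section
/- (Horseshoe Lemma for cotorsion pairs.) Let C be an abelian category and (A, B) a complete hereditary cotorsion pair in C. Given a short exact sequence 0 → X → Y → Z → 0 in C and short exact sequences 0 → X → B_X → A_X → 0 and 0 → Z → B_Z → A_Z → 0 with A_X, A_Z ∈ A and B_X, B_Z ∈ B, there exist a short exact sequence 0 → Y → B_Y → A_Y → 0 with A_Y ∈ A and B_Y ∈ B, together with short exact sequences 0 → B_X → B_Y → B_Z → 0 and 0 → A_X → A_Y → A_Z → 0, such that all the resulting squares of the 3×3 diagram commute. -/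
open CategoryTheory CategoryTheory.Limits

universe v u

variable {C : Type u} [Category.{v} C] [Abelian C]

/-- `Ext¹(A, B) = 0`, phrased as: every short exact sequence `0 → B → E → A → 0`
splits. -/
def Ext1Zero (A B : C) : Prop :=
  ∀ (E : C) (i : B ⟶ E) (p : E ⟶ A) (w : i ≫ p = 0),
    (ShortComplex.mk i p w).ShortExact → ∃ s : A ⟶ E, s ≫ p = 𝟙 A

/-- The right `Ext¹`-orthogonal class `S^⊥` of a class of objects `S`. -/
def rightPerp (S : Set C) : Set C := {B | ∀ A ∈ S, Ext1Zero A B}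

/-- The left `Ext¹`-orthogonal class `⊥S` of a class of objects `S`. -/
def leftPerp (S : Set C) : Set C := {A | ∀ B ∈ S, Ext1Zero A B}

/-- `(𝓐, 𝓑)` is a cotorsion pair: `𝓐 = ⊥𝓑` and `𝓑 = 𝓐^⊥`. -/
structure IsCotorsionPair (𝓐 𝓑 : Set C) : Prop where
  left_eq : 𝓐 = leftPerp 𝓑
  right_eq : 𝓑 = rightPerp 𝓐

/-- `(𝓐, 𝓑)` is a complete cotorsion pair: a cotorsion pair admitting approximation
sequences `0 → X → B_X → A_X → 0` and `0 → B^X → A^X → X → 0` for every object `X`. -/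
structure IsCompleteCotorsionPair (𝓐 𝓑 : Set C) extends IsCotorsionPair 𝓐 𝓑 : Prop where
  approx₁ : ∀ X : C, ∃ (B A : C) (i : X ⟶ B) (p : B ⟶ A) (w : i ≫ p = 0),
    (ShortComplex.mk i p w).ShortExact ∧ B ∈ 𝓑 ∧ A ∈ 𝓐
  approx₂ : ∀ X : C, ∃ (B A : C) (i : B ⟶ A) (p : A ⟶ X) (w : i ≫ p = 0),
    (ShortComplex.mk i p w).ShortExact ∧ B ∈ 𝓑 ∧ A ∈ 𝓐


universe w

/-- `(𝓐, 𝓑)` is a hereditary pair: `Extⁿ(A, B) = 0` for all `A ∈ 𝓐`, `B ∈ 𝓑`, `n ≥ 1`. -/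
def IsHereditary [HasExt.{w} C] (𝓐 𝓑 : Set C) : Prop :=
  ∀ A ∈ 𝓐, ∀ B ∈ 𝓑, ∀ n : ℕ, 1 ≤ n → Subsingleton (Abelian.Ext.{w} A B n)

/-!
Let `ξ ∈ Ext¹(Z, X)` be the class of `Y` and `iX_* ξ ∈ Ext¹(Z, BX)` its pushforward. The obstruction
to writing `iX_* ξ = iZ^* η` with `η ∈ Ext¹(BZ, BX)` lies in `Ext²(AZ, BX) = 0`. Any such `η` is the
class of a short exact sequence `0 ⟶ BX ⟶ BY ⟶ BZ ⟶ 0`, and the equality of classes is exactly what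
is needed for a morphism `Y ⟶ BY` completing `iX` and `iZ` to a map of short exact sequences. The
nine lemma makes its cokernels a short exact sequence, and `leftPerp` and `rightPerp` are closed
under extensions.

Mathlib defines `Ext` through the derived category, so `η` is first realised by a distinguished
triangle on single complexes; its middle term is concentrated in degree `0` by the t-structure.
-/

open CategoryTheory.Abelian CategoryTheory.Pretriangulated
open DerivedCategory (singleFunctor)

section ExtClass

lemma hom_singleFunctor_shift_eq_zero [HasDerivedCategory.{w} C] {X Y : C} {n : ℤ}
    (f : (singleFunctor C 0).obj X ⟶ ((singleFunctor C 0).obj Y)⟦n⟧) (hn : n < 0) : f = 0 := by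
  have := DerivedCategory.TStructure.t.isGE_shift ((singleFunctor C 0).obj Y) 0 n (-n) (by lia)
  exact DerivedCategory.TStructure.t.zero f 0 (-n) (by lia)

lemma exists_shortExact_of_singleFunctor_distTriang [HasDerivedCategory.{w} C] {X Y Z : C}
    (f : X ⟶ Y) (g : Y ⟶ Z)
    (δ : (singleFunctor C 0).obj Z ⟶ ((singleFunctor C 0).obj X)⟦(1 : ℤ)⟧)
    (hT : Triangle.mk ((singleFunctor C 0).map f) ((singleFunctor C 0).map g) δ ∈ distTriang _) :
    ∃ w : f ≫ g = 0, (ShortComplex.mk f g w).ShortExact := by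
  have w : f ≫ g = 0 := (singleFunctor C 0).map_injective (by
    rw [Functor.map_comp, Functor.map_zero]
    exact comp_distTriang_mor_zero₁₂ _ hT)
  have hf := Triangulated.AbelianSubcategory.isLimitKernelForkOfDistTriang
    (fun _ _ _ ↦ hom_singleFunctor_shift_eq_zero) f g δ hT
  have hg := Triangulated.AbelianSubcategory.isColimitCokernelCoforkOfDistTriang
    (fun _ _ _ ↦ hom_singleFunctor_shift_eq_zero) f g δ hT
  exact ⟨w, .mk' (ShortComplex.exact_of_f_is_kernel (.mk f g w) hf)
    (Fork.IsLimit.mono hf) (Cofork.IsColimit.epi hg)⟩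

lemma eq_singleδ_of_distTriang [HasDerivedCategory.{w} C] {S : ShortComplex C} (hS : S.ShortExact)
    (δ : (singleFunctor C 0).obj S.X₃ ⟶ ((singleFunctor C 0).obj S.X₁)⟦(1 : ℤ)⟧)
    (hT : Triangle.mk ((singleFunctor C 0).map S.f) ((singleFunctor C 0).map S.g) δ ∈
      distTriang _) :
    δ = hS.singleδ := by
  obtain ⟨c, hg, hδ⟩ := complete_distinguished_triangle_morphism _ _ hT
    hS.singleTriangle_distinguished (𝟙 ((singleFunctor C 0).obj S.X₁))
    (𝟙 ((singleFunctor C 0).obj S.X₂)) ((Category.comp_id _).trans (Category.id_comp _).symm)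
  obtain ⟨c, rfl⟩ := (singleFunctor C 0).map_surjective c
  obtain rfl : c = 𝟙 S.X₃ := by
    have := hS.epi_g
    rw [← cancel_epi S.g, Category.comp_id]
    apply (singleFunctor C 0).map_injective
    exact ((singleFunctor C 0).map_comp S.g c).trans (hg.trans (Category.id_comp _))
  have hδ' : δ ≫ (𝟙 ((singleFunctor C 0).obj S.X₁))⟦(1 : ℤ)⟧' =
    (singleFunctor C 0).map (𝟙 S.X₃) ≫ hS.singleδ := hδ
  simpa using hδ'

lemma exists_shortExact_extClass_eq [HasExt.{w} C] {X Z : C} (η : Ext.{w} Z X 1) :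
    ∃ (Y : C) (f : X ⟶ Y) (g : Y ⟶ Z) (w : f ≫ g = 0) (h : (ShortComplex.mk f g w).ShortExact),
      h.extClass = η := by
  let := HasDerivedCategory.standard C
  obtain ⟨E, i, p, hT⟩ := distinguished_cocone_triangle₂ η.hom
  have : E.IsLE 0 := DerivedCategory.TStructure.t.isLE₂ _ hT 0
    (inferInstanceAs (((singleFunctor C 0).obj X).IsLE 0))
    (inferInstanceAs (((singleFunctor C 0).obj Z).IsLE 0))
  have : E.IsGE 0 := DerivedCategory.TStructure.t.isGE₂ _ hT 0
    (inferInstanceAs (((singleFunctor C 0).obj X).IsGE 0))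
    (inferInstanceAs (((singleFunctor C 0).obj Z).IsGE 0))
  obtain ⟨Y, ⟨e⟩⟩ := E.exists_iso_singleFunctor_obj_of_isGE_of_isLE 0
  obtain ⟨f, hf⟩ := (singleFunctor C 0).map_surjective (i ≫ e.hom)
  obtain ⟨g, hg⟩ := (singleFunctor C 0).map_surjective (e.inv ≫ p)
  have hi : i ≫ e.hom = 𝟙 _ ≫ (singleFunctor C 0).map f := by rw [hf, Category.id_comp]
  have hp : p ≫ 𝟙 _ = e.hom ≫ (singleFunctor C 0).map g := by simp [hg]
  have hη : η.hom ≫ (𝟙 ((singleFunctor C 0).obj X))⟦(1 : ℤ)⟧' = 𝟙 _ ≫ η.hom := by simp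
  let iso : Triangle.mk i p η.hom ≅
      Triangle.mk ((singleFunctor C 0).map f) ((singleFunctor C 0).map g) η.hom :=
    Triangle.isoMk _ _ (Iso.refl _) e (Iso.refl _) hi hp hη
  have hT' := isomorphic_distinguished _ hT _ iso.symm
  obtain ⟨w, h⟩ := exists_shortExact_of_singleFunctor_distTriang f g _ hT'
  exact ⟨Y, f, g, w, h, Ext.ext (by rw [h.extClass_hom, eq_singleδ_of_distTriang h _ hT'])⟩

lemma exists_hom_of_extClass_comp_eq [HasExt.{w} C] {S T : ShortComplex C} (hS : S.ShortExact)
    (hT : T.ShortExact) (α : S.X₁ ⟶ T.X₁) (γ : S.X₃ ⟶ T.X₃)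
    (h : hS.extClass.comp (Ext.mk₀.{w} α) (add_zero 1) =
      (Ext.mk₀.{w} γ).comp hT.extClass (zero_add 1)) :
    ∃ φ : S ⟶ T, φ.τ₁ = α ∧ φ.τ₃ = γ := by
  let := HasDerivedCategory.standard C
  have hδ : hS.singleδ ≫ ((singleFunctor C 0).map α)⟦(1 : ℤ)⟧' =
      (singleFunctor C 0).map γ ≫ hT.singleδ := by
    simpa [ShiftedHom.mk₀_comp, ShiftedHom.comp_mk₀] using! congr_arg Ext.hom h
  obtain ⟨β, hf, hg⟩ := complete_distinguished_triangle_morphism₂ _ _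
    hS.singleTriangle_distinguished hT.singleTriangle_distinguished
    ((singleFunctor C 0).map α) ((singleFunctor C 0).map γ) hδ
  obtain ⟨β, rfl⟩ := (singleFunctor C 0).map_surjective β
  refine ⟨⟨α, β, γ, ?_, ?_⟩, rfl, rfl⟩
  · exact (singleFunctor C 0).map_injective (by simpa using! hf.symm)
  · exact (singleFunctor C 0).map_injective (by simpa using! hg.symm)

end ExtClass

section Orthogonality

lemma ext1Zero_iff_subsingleton_ext [HasExt.{w} C] {A B : C} :
    Ext1Zero A B ↔ Subsingleton (Ext.{w} A B 1) := by
  constructor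
  · intro h
    refine subsingleton_of_forall_eq 0 fun η ↦ ?_
    obtain ⟨E, i, p, w, hE, rfl⟩ := exists_shortExact_extClass_eq η
    obtain ⟨s, hs⟩ := h E i p w hE
    rw [← Ext.mk₀_id_comp hE.extClass, ← hs, ← Ext.mk₀_comp_mk₀_assoc, hE.comp_extClass,
      Ext.comp_zero]
  · intro _ E i p w hE
    obtain ⟨x, hx⟩ := Ext.covariant_sequence_exact₃ A hE (Ext.mk₀ (𝟙 A)) (zero_add 1)
      (Subsingleton.elim _ _)
    obtain ⟨s, rfl⟩ := (Ext.mk₀_bijective A E).2 x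
    exact ⟨s, (Ext.mk₀_bijective A A).1 (by simpa using hx)⟩

variable {S : ShortComplex C}

lemma ext1Zero_left_of_shortExact (hS : S.ShortExact) {B : C} (h₁ : Ext1Zero S.X₁ B)
    (h₃ : Ext1Zero S.X₃ B) : Ext1Zero S.X₂ B := by
  have := HasExt.standard C
  rw [ext1Zero_iff_subsingleton_ext] at h₁ h₃ ⊢
  refine subsingleton_of_forall_eq 0 fun η ↦ ?_
  obtain ⟨ξ, rfl⟩ := Ext.contravariant_sequence_exact₂ hS B η (Subsingleton.elim _ _)
  rw [Subsingleton.elim ξ 0, Ext.comp_zero]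

lemma ext1Zero_right_of_shortExact (hS : S.ShortExact) {A : C} (h₁ : Ext1Zero A S.X₁)
    (h₃ : Ext1Zero A S.X₃) : Ext1Zero A S.X₂ := by
  have := HasExt.standard C
  rw [ext1Zero_iff_subsingleton_ext] at h₁ h₃ ⊢
  refine subsingleton_of_forall_eq 0 fun η ↦ ?_
  obtain ⟨ξ, rfl⟩ := Ext.covariant_sequence_exact₂ A hS η (Subsingleton.elim _ _)
  rw [Subsingleton.elim ξ 0, Ext.zero_comp]

lemma mem_leftPerp_of_shortExact {𝓢 : Set C} (hS : S.ShortExact) (h₁ : S.X₁ ∈ leftPerp 𝓢)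
    (h₃ : S.X₃ ∈ leftPerp 𝓢) : S.X₂ ∈ leftPerp 𝓢 :=
  fun B hB ↦ ext1Zero_left_of_shortExact hS (h₁ B hB) (h₃ B hB)

lemma mem_rightPerp_of_shortExact {𝓢 : Set C} (hS : S.ShortExact) (h₁ : S.X₁ ∈ rightPerp 𝓢)
    (h₃ : S.X₃ ∈ rightPerp 𝓢) : S.X₂ ∈ rightPerp 𝓢 :=
  fun A hA ↦ ext1Zero_right_of_shortExact hS (h₁ A hA) (h₃ A hA)

end Orthogonality

section NineLemma

open ZeroObject

lemma shortExact_of_shortExact_map_π {R : ShortComplex (ShortComplex C)}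
    (h₁ : (R.map ShortComplex.π₁).ShortExact) (h₂ : (R.map ShortComplex.π₂).ShortExact)
    (h₃ : (R.map ShortComplex.π₃).ShortExact) : R.ShortExact := by
  have hg : IsColimit (CokernelCofork.ofπ R.g R.zero) :=
    ShortComplex.isColimitOfIsColimitπ _
      ((isColimitMapCoconeCoforkEquiv' ShortComplex.π₁ R.zero).symm h₁.gIsCokernel)
      ((isColimitMapCoconeCoforkEquiv' ShortComplex.π₂ R.zero).symm h₂.gIsCokernel)
      ((isColimitMapCoconeCoforkEquiv' ShortComplex.π₃ R.zero).symm h₃.gIsCokernel)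
  have hf : IsLimit (KernelFork.ofι R.f R.zero) :=
    ShortComplex.isLimitOfIsLimitπ _
      ((isLimitMapConeForkEquiv' ShortComplex.π₁ R.zero).symm h₁.fIsKernel)
      ((isLimitMapConeForkEquiv' ShortComplex.π₂ R.zero).symm h₂.fIsKernel)
      ((isLimitMapConeForkEquiv' ShortComplex.π₃ R.zero).symm h₃.fIsKernel)
  exact .mk' (R.exact_of_f_is_kernel hf) (Fork.IsLimit.mono hf) (Cofork.IsColimit.epi hg)

lemma shortExact_X₃_of_shortExact_X₁_X₂ {R : ShortComplex (ShortComplex C)} (hR : R.ShortExact)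
    (h₁ : R.X₁.ShortExact) (h₂ : R.X₂.ShortExact) : R.X₃.ShortExact := by
  have := hR.mono_f
  let D : ShortComplex.SnakeInput C :=
    { L₀ := 0
      L₁ := R.X₁
      L₂ := R.X₂
      L₃ := R.X₃
      v₀₁ := 0
      v₁₂ := R.f
      v₂₃ := R.g
      w₁₃ := R.zero
      h₀ := KernelFork.IsLimit.ofMonoOfIsZero _ inferInstance (isZero_zero _)
      h₃ := hR.gIsCokernel
      L₁_exact := h₁.exact
      epi_L₁_g := h₁.epi_g
      L₂_exact := h₂.exact
      mono_L₂_f := h₂.mono_f }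
  have hL₀ : IsZero D.L₀.X₃ := ShortComplex.π₃.map_isZero (isZero_zero (ShortComplex C))
  have := h₂.epi_g
  exact .mk' D.L₃_exact (D.L₂'_exact.mono_g (hL₀.eq_zero_of_src _)) D.epi_L₃_g

end NineLemma

section Horseshoe

lemma exists_hom_shortExact_of_subsingleton_ext [HasExt.{w} C] {S : ShortComplex C}
    (hS : S.ShortExact) {B₁ B₃ A₃ : C} (i₁ : S.X₁ ⟶ B₁) {i₃ : S.X₃ ⟶ B₃} {p₃ : B₃ ⟶ A₃}
    {w₃ : i₃ ≫ p₃ = 0} (h₃ : (ShortComplex.mk i₃ p₃ w₃).ShortExact)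
    [Subsingleton (Ext.{w} A₃ B₁ 2)] :
    ∃ (B₂ : C) (b₁ : B₁ ⟶ B₂) (b₂ : B₂ ⟶ B₃) (wb : b₁ ≫ b₂ = 0),
      (ShortComplex.mk b₁ b₂ wb).ShortExact ∧
      ∃ φ : S ⟶ ShortComplex.mk b₁ b₂ wb, φ.τ₁ = i₁ ∧ φ.τ₃ = i₃ := by
  obtain ⟨η, hη⟩ := Ext.contravariant_sequence_exact₁ h₃ B₁
    (hS.extClass.comp (Ext.mk₀ i₁) (add_zero 1)) (n₁ := 2) rfl (Subsingleton.elim _ _)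
  obtain ⟨B₂, b₁, b₂, wb, hb, rfl⟩ := exists_shortExact_extClass_eq η
  exact ⟨B₂, b₁, b₂, wb, hb, exists_hom_of_extClass_comp_eq hS hb i₁ i₃ hη.symm⟩

lemma exists_shortExact_cokernel {S T : ShortComplex C} (hS : S.ShortExact) (hT : T.ShortExact)
    (φ : S ⟶ T) {A₁ A₃ : C} {p₁ : T.X₁ ⟶ A₁} {p₃ : T.X₃ ⟶ A₃} {w₁ : φ.τ₁ ≫ p₁ = 0}
    {w₃ : φ.τ₃ ≫ p₃ = 0} (h₁ : (ShortComplex.mk φ.τ₁ p₁ w₁).ShortExact)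
    (h₃ : (ShortComplex.mk φ.τ₃ p₃ w₃).ShortExact) :
    ∃ (A₂ : C) (p₂ : T.X₂ ⟶ A₂) (w₂ : φ.τ₂ ≫ p₂ = 0),
      (ShortComplex.mk φ.τ₂ p₂ w₂).ShortExact ∧
      ∃ (a₁ : A₁ ⟶ A₂) (a₂ : A₂ ⟶ A₃) (wa : a₁ ≫ a₂ = 0),
        (ShortComplex.mk a₁ a₂ wa).ShortExact ∧ T.f ≫ p₂ = p₁ ≫ a₁ ∧ T.g ≫ p₃ = p₂ ≫ a₂ := by
  have := hS.mono_f
  have := hT.mono_f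
  have : Mono φ.τ₁ := h₁.mono_f
  have : Mono φ.τ₃ := h₃.mono_f
  have : Epi p₁ := h₁.epi_g
  have : Mono φ.τ₂ := ShortComplex.mono_τ₂_of_exact_of_mono φ hS.exact
  have h₂ : (ShortComplex.mk φ.τ₂ (cokernel.π φ.τ₂) (cokernel.condition _)).ShortExact :=
    .mk' (ShortComplex.exact_cokernel _) inferInstance inferInstance
  let a₁ : A₁ ⟶ cokernel φ.τ₂ := h₁.exact.desc (T.f ≫ cokernel.π φ.τ₂) (by
    dsimp
    rw [φ.comm₁₂_assoc, cokernel.condition, comp_zero])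
  have ha₁ : p₁ ≫ a₁ = T.f ≫ cokernel.π φ.τ₂ := h₁.exact.g_desc _ _
  let a₂ : cokernel φ.τ₂ ⟶ A₃ := cokernel.desc φ.τ₂ (T.g ≫ p₃) (by
    rw [φ.comm₂₃_assoc, w₃, comp_zero])
  have ha₂ : cokernel.π φ.τ₂ ≫ a₂ = T.g ≫ p₃ := cokernel.π_desc _ _ _
  have wa : a₁ ≫ a₂ = 0 := by
    rw [← cancel_epi p₁, reassoc_of% ha₁, ha₂, T.zero_assoc, zero_comp, comp_zero]
  let ψ : T ⟶ ShortComplex.mk a₁ a₂ wa := ⟨p₁, cokernel.π φ.τ₂, p₃, ha₁, ha₂⟩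
  have hφψ : φ ≫ ψ = 0 := ShortComplex.hom_ext _ _ w₁ (cokernel.condition _) w₃
  have hcol : (ShortComplex.mk φ ψ hφψ).ShortExact := shortExact_of_shortExact_map_π h₁ h₂ h₃
  exact ⟨_, _, _, h₂, a₁, a₂, wa, shortExact_X₃_of_shortExact_X₁_X₂ hcol hS hT, ha₁.symm, ha₂.symm⟩

end Horseshoe

theorem stmt_10_general [HasExt.{w} C] (𝓐 𝓑 : Set C) (hpair : IsCotorsionPair 𝓐 𝓑)
    {X Y Z : C} (f : X ⟶ Y) (g : Y ⟶ Z) (w : f ≫ g = 0)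
    (hse : (ShortComplex.mk f g w).ShortExact)
    {BX AX : C} (iX : X ⟶ BX) (pX : BX ⟶ AX) (wX : iX ≫ pX = 0)
    (hseX : (ShortComplex.mk iX pX wX).ShortExact) (hAX : AX ∈ 𝓐) (hBX : BX ∈ 𝓑)
    {BZ AZ : C} (iZ : Z ⟶ BZ) (pZ : BZ ⟶ AZ) (wZ : iZ ≫ pZ = 0)
    (hseZ : (ShortComplex.mk iZ pZ wZ).ShortExact) (hAZ : AZ ∈ 𝓐) (hBZ : BZ ∈ 𝓑)
    [Subsingleton (Ext.{w} AZ BX 2)] :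
    ∃ (BY AY : C) (iY : Y ⟶ BY) (pY : BY ⟶ AY) (wY : iY ≫ pY = 0),
      (ShortComplex.mk iY pY wY).ShortExact ∧ AY ∈ 𝓐 ∧ BY ∈ 𝓑 ∧
      ∃ (b₁ : BX ⟶ BY) (b₂ : BY ⟶ BZ) (wb : b₁ ≫ b₂ = 0),
        (ShortComplex.mk b₁ b₂ wb).ShortExact ∧
        ∃ (a₁ : AX ⟶ AY) (a₂ : AY ⟶ AZ) (wa : a₁ ≫ a₂ = 0),
          (ShortComplex.mk a₁ a₂ wa).ShortExact ∧
          f ≫ iY = iX ≫ b₁ ∧ g ≫ iZ = iY ≫ b₂ ∧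
          b₁ ≫ pY = pX ≫ a₁ ∧ b₂ ≫ pZ = pY ≫ a₂ := by
  obtain ⟨BY, b₁, b₂, wb, hb, φ, rfl, rfl⟩ :=
    exists_hom_shortExact_of_subsingleton_ext hse iX hseZ
  obtain ⟨AY, pY, wY, hY, a₁, a₂, wa, ha, hb₁, hb₂⟩ :=
    exists_shortExact_cokernel hse hb φ hseX hseZ
  have hAY : AY ∈ 𝓐 := by
    rw [hpair.left_eq] at hAX hAZ ⊢
    exact mem_leftPerp_of_shortExact ha hAX hAZ
  have hBY : BY ∈ 𝓑 := by
    rw [hpair.right_eq] at hBX hBZ ⊢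
    exact mem_rightPerp_of_shortExact hb hBX hBZ
  exact ⟨BY, AY, φ.τ₂, pY, wY, hY, hAY, hBY, b₁, b₂, wb, hb, a₁, a₂, wa, ha,
    φ.comm₁₂.symm, φ.comm₂₃.symm, hb₁, hb₂⟩

/-- **Horseshoe Lemma for cotorsion pairs.**  Let `(𝓐, 𝓑)` be a complete hereditary
cotorsion pair in an abelian category `C`.  Given a short exact sequence
`0 → X → Y → Z → 0` and approximation sequences `0 → X → B_X → A_X → 0` and
`0 → Z → B_Z → A_Z → 0` with `A_X, A_Z ∈ 𝓐` and `B_X, B_Z ∈ 𝓑`, there exist a short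
exact sequence `0 → Y → B_Y → A_Y → 0` with `A_Y ∈ 𝓐`, `B_Y ∈ 𝓑`, together with short
exact sequences `0 → B_X → B_Y → B_Z → 0` and `0 → A_X → A_Y → A_Z → 0` making all
squares of the resulting 3×3 diagram commute. -/
theorem stmt_10 [HasExt.{w} C] (𝓐 𝓑 : Set C)
    (hpair : IsCompleteCotorsionPair 𝓐 𝓑) (hher : IsHereditary 𝓐 𝓑)
    {X Y Z : C} (f : X ⟶ Y) (g : Y ⟶ Z) (w : f ≫ g = 0)
    (hse : (ShortComplex.mk f g w).ShortExact)
    {BX AX : C} (iX : X ⟶ BX) (pX : BX ⟶ AX) (wX : iX ≫ pX = 0)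
    (hseX : (ShortComplex.mk iX pX wX).ShortExact) (hAX : AX ∈ 𝓐) (hBX : BX ∈ 𝓑)
    {BZ AZ : C} (iZ : Z ⟶ BZ) (pZ : BZ ⟶ AZ) (wZ : iZ ≫ pZ = 0)
    (hseZ : (ShortComplex.mk iZ pZ wZ).ShortExact) (hAZ : AZ ∈ 𝓐) (hBZ : BZ ∈ 𝓑) :
    ∃ (BY AY : C) (iY : Y ⟶ BY) (pY : BY ⟶ AY) (wY : iY ≫ pY = 0),
      (ShortComplex.mk iY pY wY).ShortExact ∧ AY ∈ 𝓐 ∧ BY ∈ 𝓑 ∧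
      ∃ (b₁ : BX ⟶ BY) (b₂ : BY ⟶ BZ) (wb : b₁ ≫ b₂ = 0),
        (ShortComplex.mk b₁ b₂ wb).ShortExact ∧
        ∃ (a₁ : AX ⟶ AY) (a₂ : AY ⟶ AZ) (wa : a₁ ≫ a₂ = 0),
          (ShortComplex.mk a₁ a₂ wa).ShortExact ∧
          f ≫ iY = iX ≫ b₁ ∧ g ≫ iZ = iY ≫ b₂ ∧
          b₁ ≫ pY = pX ≫ a₁ ∧ b₂ ≫ pZ = pY ≫ a₂ := by
  have := hher AZ hAZ BX hBX 2 one_le_two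
  exact stmt_10_general 𝓐 𝓑 hpair.toIsCotorsionPair f g w hse iX pX wX hseX hAX hBX
    iZ pZ wZ hseZ hAZ hBZ
end

section
/- Let C be an abelian category, X an object of C, n ∈ ℤ, and Y a cochain complex over C. Then there are injective homomorphisms of abelian groups Ext¹_C(X, Zⁿ(Y)) → Ext¹_{Ch(C)}(Sⁿ(X), Y) and Ext¹_C(Yⁿ/Bⁿ(Y), X) → Ext¹_{Ch(C)}(Y, Sⁿ(X)), natural in all variables, where Zⁿ(Y) = ker(dⁿ : Yⁿ → Y^{n+1}) and Bⁿ(Y) = im(d^{n-1} : Y^{n-1} → Yⁿ). If Y is acyclic, both homomorphisms are isomorphisms. -/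
open CategoryTheory CategoryTheory.Limits

universe w' w v u

variable {𝒜 : Type u} [Category.{v} 𝒜] [Abelian 𝒜]

/-- The cochain complex with the object `X` concentrated in degree `n`. -/
noncomputable def sph (n : ℤ) (X : 𝒜) : CochainComplex 𝒜 ℤ :=
  (HomologicalComplex.single 𝒜 (ComplexShape.up ℤ) n).obj X

/-- The functorial action of `Sⁿ(-)`. -/
noncomputable def sphMap (n : ℤ) {X X' : 𝒜} (f : X ⟶ X') : sph n X ⟶ sph n X' :=
  (HomologicalComplex.single 𝒜 (ComplexShape.up ℤ) n).map f

/-!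
Let `F` be an exact functor with right adjoint `G`. Applying `F` and composing with the counit
gives `Ext¹(X, GY) → Ext¹(FX, FGY) → Ext¹(FX, Y)`. If the image of an extension
`0 → GY → E → X → 0` splits, a morphism `FE ⟶ Y` extends the counit, and its transpose splits the
original extension: the map is injective. If `G` maps an extension of `FX` by `Y` to a short exact
sequence, pulling the result back along the unit gives a preimage: the map is surjective as soon as
`G` preserves all such extensions. Dually for an exact functor with a left adjoint.

The exact functor `Sⁿ` has the right adjoint `Zⁿ` and the left adjoint `Y ↦ Yⁿ/Bⁿ(Y)`. On extensions
involving `Y`, the obstruction to the exactness of these adjoints is the homology of `Y` in degree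
`n + 1`, resp. `n - 1`.
-/

open Abelian

section Effaceability

variable {C : Type*} [Category* C] [Abelian C]

section

open HomologicalComplex

lemma epi_f_of_epi_homologyMap_single {ι : Type*} [DecidableEq ι] {c : ComplexShape ι}
    {K : HomologicalComplex C c} {X : C} {i : ι} (π : K ⟶ (single C c i).obj X)
    [Epi (homologyMap π i)] : Epi (π.f i) := by
  have fac : K.iCycles i ≫ π.f i ≫ (singleObjXSelf c i X).hom =
      K.homologyπ i ≫ homologyMap π i ≫ (singleObjHomologySelfIso c i X).hom := by
    rw [homologyπ_naturality_assoc, homologyπ_singleObjHomologySelfIso_hom,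
      singleObjCyclesSelfIso_hom, cyclesMap_i_assoc]
  have : Epi (π.f i ≫ (singleObjXSelf c i X).hom) := epi_of_epi_fac fac
  simpa using epi_comp (π.f i ≫ (singleObjXSelf c i X).hom) (singleObjXSelf c i X).inv

end

open HomologicalComplex in
-- A map out of `X[-i]` in the derived category becomes a roof `X[-i] ← K → L` with `K` concentrated
-- in degrees `≤ i`; then `Kⁱ[-i]` maps to `K`, and `Kⁱ ⟶ X` is the required epimorphism.
lemma exists_epi_Q_map_comp_eq_zero [HasDerivedCategory.{w} C] {X : C} {L : CochainComplex C ℤ}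
    {n i : ℤ} [L.IsStrictlyLE n] (hn : n < i)
    (φ : DerivedCategory.Q.obj ((single C (.up ℤ) i).obj X) ⟶ DerivedCategory.Q.obj L) :
    ∃ (P : C) (p : P ⟶ X), Epi p ∧
      DerivedCategory.Q.map ((single C (.up ℤ) i).map p) ≫ φ = 0 := by
  have : CochainComplex.IsStrictlyLE ((single C (.up ℤ) i).obj X) i :=
    inferInstanceAs (((CochainComplex.singleFunctor C i).obj X).IsStrictlyLE i)
  obtain ⟨K, _, π, hπ, g, rfl⟩ := DerivedCategory.right_fac_of_isStrictlyLE φ i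
  have : QuasiIso π := (DerivedCategory.isIso_Q_map_iff_quasiIso C π).1 hπ
  have : Epi (π.f i) := epi_f_of_epi_homologyMap_single π
  let p : K.X i ⟶ X := π.f i ≫ (singleObjXSelf (.up ℤ) i X).hom
  let s : (single C (.up ℤ) i).obj (K.X i) ⟶ K := mkHomFromSingle (𝟙 _) (by
    rintro _ rfl
    exact (K.isZero_of_isStrictlyLE i (i + 1) (by simp)).eq_of_tgt _ _)
  have s_π : s ≫ π = (single C (.up ℤ) i).map p := by
    apply from_single_hom_ext
    simp [s, p, single_map_f_self]
  have s_g : s ≫ g = 0 := by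
    apply from_single_hom_ext
    exact (L.isZero_of_isStrictlyLE n i hn).eq_of_tgt _ _
  refine ⟨K.X i, p, epi_comp _ _, ?_⟩
  rw [← s_π, Functor.map_comp_assoc, IsIso.hom_inv_id_assoc, ← Functor.map_comp, s_g,
    Functor.map_zero]

lemma exists_epi_mk₀_comp_eq_zero [HasExt.{w} C] {X Y : C} {n : ℕ} (e : Ext.{w} X Y (n + 1)) :
    ∃ (P : C) (p : P ⟶ X), Epi p ∧ (Ext.mk₀ p).comp e (zero_add _) = 0 := by
  let := HasDerivedCategory.standard C
  let shift := (DerivedCategory.singleFunctors C).shiftIso (n + 1) (-(n + 1)) 0 (by lia)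
  obtain ⟨P, p, hp, h⟩ := exists_epi_Q_map_comp_eq_zero (n := -(n + 1)) (by lia)
    (L := (CochainComplex.singleFunctor C (-(n + 1))).obj Y) (e.hom ≫ shift.hom.app Y)
  refine ⟨P, p, hp, ?_⟩
  ext
  rw [Ext.comp_hom, Ext.mk₀_hom, Ext.zero_hom, ShiftedHom.mk₀_comp,
    ← cancel_mono (shift.hom.app Y), zero_comp, Category.assoc]
  exact h

end Effaceability

section Extensions

variable {C : Type*} [Category* C] [Abelian C] {S : ShortComplex C}

/-- The pushout of a sequence `X₁ ⟶ X₂ ⟶ X₃` along a morphism `X₁ ⟶ Y`, i.e. the sequence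
`Y ⟶ X₂ ⊔_{X₁} Y ⟶ X₃`. -/
noncomputable abbrev pushoutShortComplex (S : ShortComplex C) {Y : C} (f : S.X₁ ⟶ Y) :
    ShortComplex C :=
  ShortComplex.mk (pushout.inr S.f f) (pushout.desc S.g 0 (by simp)) (pushout.inr_desc _ _ _)

/-- The canonical morphism from a short complex to its pushout. -/
noncomputable def toPushoutShortComplex (S : ShortComplex C) {Y : C} (f : S.X₁ ⟶ Y) :
    S ⟶ pushoutShortComplex S f where
  τ₁ := f
  τ₂ := pushout.inl S.f f
  τ₃ := 𝟙 S.X₃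
  comm₁₂ := pushout.condition.symm
  comm₂₃ := (pushout.inl_desc _ _ _).trans (Category.comp_id _).symm

lemma shortExact_pushoutShortComplex (hS : S.ShortExact) {Y : C} (f : S.X₁ ⟶ Y) :
    (pushoutShortComplex S f).ShortExact := by
  have := hS.mono_f
  have := hS.epi_g
  have : Epi (pushoutShortComplex S f).g := epi_of_epi_fac (pushout.inl_desc S.g 0 (by simp))
  refine { exact := ShortComplex.exact_of_g_is_cokernel _ ?_ }
  refine CokernelCofork.IsColimit.ofπ' _ _ fun {A} k (hk : pushout.inr S.f f ≫ k = 0) ↦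
    ⟨hS.exact.desc (pushout.inl S.f f ≫ k) (by rw [pushout.condition_assoc, hk, comp_zero]), ?_⟩
  apply pushout.hom_ext
  · rw [pushout.inl_desc_assoc, hS.exact.g_desc]
  · rw [pushout.inr_desc_assoc]
    exact zero_comp.trans hk.symm

variable [HasExt.{w} C]

lemma extClass_comp_mk₀_eq_extClass_pushout (hS : S.ShortExact) {Y : C} (f : S.X₁ ⟶ Y) :
    hS.extClass.comp (Ext.mk₀ f) (add_zero 1) =
      (shortExact_pushoutShortComplex hS f).extClass := by
  refine (ShortComplex.ShortExact.extClass_naturality hS (shortExact_pushoutShortComplex hS f)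
    (toPushoutShortComplex S f)).trans ?_
  exact Ext.mk₀_id_comp _

lemma exists_extClass_eq {X Y : C} (e : Ext.{w} X Y 1) :
    ∃ (E : C) (i : Y ⟶ E) (p : E ⟶ X) (w : i ≫ p = 0)
      (hS : (ShortComplex.mk i p w).ShortExact), hS.extClass = e := by
  obtain ⟨P, p, _, hp⟩ := exists_epi_mk₀_comp_eq_zero e
  have hS : (ShortComplex.mk (kernel.ι p) p (kernel.condition p)).ShortExact :=
    { exact := ShortComplex.exact_kernel p }
  obtain ⟨φ, hφ⟩ := Ext.contravariant_sequence_exact₃ hS Y e hp (add_zero 1)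
  obtain ⟨f, rfl⟩ := (Ext.mk₀_bijective _ _).2 φ
  exact ⟨_, _, _, _, shortExact_pushoutShortComplex hS f,
    (extClass_comp_mk₀_eq_extClass_pushout hS f).symm.trans hφ⟩

lemma extClass_comp_mk₀_eq_zero_iff (hS : S.ShortExact) {Y : C} (f : S.X₁ ⟶ Y) :
    hS.extClass.comp (Ext.mk₀ f) (add_zero 1) = 0 ↔ ∃ r, S.f ≫ r = f := by
  refine ⟨fun h ↦ ?_, ?_⟩
  · obtain ⟨ρ, hρ⟩ := Ext.contravariant_sequence_exact₁ hS Y (Ext.mk₀ f) (add_zero 1) h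
    obtain ⟨r, rfl⟩ := (Ext.mk₀_bijective _ _).2 ρ
    rw [Ext.mk₀_comp_mk₀] at hρ
    exact ⟨r, (Ext.mk₀_bijective _ _).1 hρ⟩
  · rintro ⟨r, rfl⟩
    rw [← Ext.mk₀_comp_mk₀, hS.extClass_comp_assoc]

lemma mk₀_comp_extClass_eq_zero_iff (hS : S.ShortExact) {X : C} (f : X ⟶ S.X₃) :
    (Ext.mk₀ f).comp hS.extClass (zero_add 1) = 0 ↔ ∃ s, s ≫ S.g = f := by
  refine ⟨fun h ↦ ?_, ?_⟩
  · obtain ⟨σ, hσ⟩ := Ext.covariant_sequence_exact₃ X hS (Ext.mk₀ f) (zero_add 1) h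
    obtain ⟨s, rfl⟩ := (Ext.mk₀_bijective _ _).2 σ
    rw [Ext.mk₀_comp_mk₀] at hσ
    exact ⟨s, (Ext.mk₀_bijective _ _).1 hσ⟩
  · rintro ⟨s, rfl⟩
    rw [← Ext.mk₀_comp_mk₀_assoc, hS.comp_extClass, Ext.comp_zero]

end Extensions

section Adjunction

variable {C D : Type*} [Category* C] [Category* D] [Abelian C] [Abelian D]

variable [HasExt.{w} C] [HasExt.{w'} D]
  {F : C ⥤ D} [F.Additive] [PreservesFiniteLimits F] [PreservesFiniteColimits F] {G : D ⥤ C}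

section ExactLeftAdjoint

variable (adj : F ⊣ G)

/-- The homomorphism `Extⁿ(X, GY) → Extⁿ(FX, Y)` for an exact functor `F` with right adjoint `G`:
apply `F`, then compose with the counit. -/
noncomputable def extHomOfExactLeftAdjoint (X : C) (Y : D) (n : ℕ) :
    Ext.{w} X (G.obj Y) n →+ Ext.{w'} (F.obj X) Y n :=
  ((Ext.mk₀ (adj.counit.app Y)).postcomp (F.obj X) (add_zero n)).comp
    (F.mapExtAddHom X (G.obj Y) n)

lemma extHomOfExactLeftAdjoint_apply {X : C} {Y : D} {n : ℕ} (e : Ext.{w} X (G.obj Y) n) :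
    extHomOfExactLeftAdjoint.{w', w} adj X Y n e =
      (e.mapExactFunctor F).comp (Ext.mk₀ (adj.counit.app Y)) (add_zero n) := rfl

lemma extHomOfExactLeftAdjoint_mk₀_comp {X X' : C} (f : X ⟶ X') {Y : D} {n : ℕ}
    (e : Ext.{w} X' (G.obj Y) n) :
    extHomOfExactLeftAdjoint.{w', w} adj X Y n ((Ext.mk₀ f).comp e (zero_add n)) =
      (Ext.mk₀ (F.map f)).comp (extHomOfExactLeftAdjoint adj X' Y n e) (zero_add n) := by
  simp only [extHomOfExactLeftAdjoint_apply, Ext.mapExactFunctor_comp, Ext.mapExactFunctor_mk₀,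
    Ext.comp_assoc_of_third_deg_zero]

lemma extHomOfExactLeftAdjoint_comp_mk₀ {X : C} {Y Y' : D} (g : Y ⟶ Y') {n : ℕ}
    (e : Ext.{w} X (G.obj Y) n) :
    extHomOfExactLeftAdjoint.{w', w} adj X Y' n (e.comp (Ext.mk₀ (G.map g)) (add_zero n)) =
      (extHomOfExactLeftAdjoint adj X Y n e).comp (Ext.mk₀ g) (add_zero n) := by
  have counit_naturality : F.map (G.map g) ≫ adj.counit.app Y' = adj.counit.app Y ≫ g :=
    adj.counit_naturality g
  simp only [extHomOfExactLeftAdjoint_apply, Ext.mapExactFunctor_comp, Ext.mapExactFunctor_mk₀,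
    Ext.comp_assoc_of_third_deg_zero, Ext.mk₀_comp_mk₀, counit_naturality]

-- Both sides say that a morphism out of `X₁`, resp. `F X₁`, extends to the middle term of the
-- extension representing `e`, resp. `F e`, and such extensions correspond under the adjunction.
lemma mapExactFunctor_comp_mk₀_eq_zero_iff {X Z : C} {Y : D} (e : Ext.{w} X Z 1)
    (f : F.obj Z ⟶ Y) :
    (e.mapExactFunctor F : Ext.{w'} _ _ 1).comp (Ext.mk₀ f) (add_zero 1) = 0 ↔
      e.comp (Ext.mk₀ (adj.homEquiv Z Y f)) (add_zero 1) = 0 := by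
  obtain ⟨E, i, p, w, hS, rfl⟩ := exists_extClass_eq e
  rw [Ext.mapExactFunctor_extClass]
  have transpose (r : F.obj E ⟶ Y) :
      F.map i ≫ r = f ↔ i ≫ adj.homEquiv E Y r = adj.homEquiv Z Y f := by
    rw [← adj.homEquiv_naturality_left, EmbeddingLike.apply_eq_iff_eq]
  exact (extClass_comp_mk₀_eq_zero_iff (hS.map_of_exact F) f).trans <|
    ((adj.homEquiv E Y).exists_congr transpose).trans (extClass_comp_mk₀_eq_zero_iff hS _).symm

lemma extHomOfExactLeftAdjoint_injective (X : C) (Y : D) :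
    Function.Injective (extHomOfExactLeftAdjoint.{w', w} adj X Y 1) := by
  rw [injective_iff_map_eq_zero]
  intro e he
  have transpose_counit : adj.homEquiv (G.obj Y) Y (adj.counit.app Y) = 𝟙 _ := by
    simp [adj.homEquiv_unit]
  rw [← Ext.comp_mk₀_id e, ← transpose_counit]
  exact (mapExactFunctor_comp_mk₀_eq_zero_iff adj e _).1 he

lemma extHomOfExactLeftAdjoint_mk₀_comp_extClass {S : ShortComplex D} (hS : S.ShortExact)
    {w : G.map S.f ≫ G.map S.g = 0} (hGS : (ShortComplex.mk _ _ w).ShortExact)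
    {X : C} (f : X ⟶ G.obj S.X₃) :
    extHomOfExactLeftAdjoint.{w', w} adj X S.X₁ 1
        ((Ext.mk₀ f).comp hGS.extClass (zero_add 1)) =
      (Ext.mk₀ ((adj.homEquiv _ _).symm f)).comp hS.extClass (zero_add 1) := by
  let ε : (ShortComplex.mk _ _ w).map F ⟶ S :=
    { τ₁ := adj.counit.app _
      τ₂ := adj.counit.app _
      τ₃ := adj.counit.app _
      comm₁₂ := (adj.counit_naturality _).symm
      comm₂₃ := (adj.counit_naturality _).symm }
  have map_extClass : (hGS.extClass.mapExactFunctor F).comp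
      (Ext.mk₀ (adj.counit.app S.X₁)) (add_zero 1) =
        (Ext.mk₀ (adj.counit.app S.X₃)).comp hS.extClass (zero_add 1) := by
    rw [Ext.mapExactFunctor_extClass]
    exact ShortComplex.ShortExact.extClass_naturality (hGS.map_of_exact F) hS ε
  rw [extHomOfExactLeftAdjoint_mk₀_comp, extHomOfExactLeftAdjoint_apply, map_extClass,
    Ext.mk₀_comp_mk₀_assoc, adj.homEquiv_counit]

lemma extHomOfExactLeftAdjoint_surjective [G.PreservesZeroMorphisms] (X : C) {Y : D}
    (hY : ∀ {W Z : D} (i : Y ⟶ W) (p : W ⟶ Z) (w : i ≫ p = 0),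
      (ShortComplex.mk i p w).ShortExact → ((ShortComplex.mk i p w).map G).ShortExact) :
    Function.Surjective (extHomOfExactLeftAdjoint.{w', w} adj X Y 1) := by
  intro e
  obtain ⟨W, i, p, w, hS, rfl⟩ := exists_extClass_eq e
  refine ⟨(Ext.mk₀ (adj.homEquiv X _ (𝟙 _))).comp (hY i p w hS).extClass (zero_add 1), ?_⟩
  refine (extHomOfExactLeftAdjoint_mk₀_comp_extClass adj hS (hY i p w hS) _).trans ?_
  rw [Equiv.symm_apply_apply, Ext.mk₀_id_comp]

end ExactLeftAdjoint

section ExactRightAdjoint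

variable (adj : G ⊣ F)

/-- The homomorphism `Extⁿ(GY, X) → Extⁿ(Y, FX)` for an exact functor `F` with left adjoint `G`:
apply `F`, then compose with the unit. -/
noncomputable def extHomOfExactRightAdjoint (Y : D) (X : C) (n : ℕ) :
    Ext.{w} (G.obj Y) X n →+ Ext.{w'} Y (F.obj X) n :=
  ((Ext.mk₀ (adj.unit.app Y)).precomp (F.obj X) (zero_add n)).comp
    (F.mapExtAddHom (G.obj Y) X n)

lemma extHomOfExactRightAdjoint_apply {Y : D} {X : C} {n : ℕ} (e : Ext.{w} (G.obj Y) X n) :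
    extHomOfExactRightAdjoint.{w', w} adj Y X n e =
      (Ext.mk₀ (adj.unit.app Y)).comp (e.mapExactFunctor F) (zero_add n) := rfl

lemma extHomOfExactRightAdjoint_comp_mk₀ {Y : D} {X X' : C} (f : X ⟶ X') {n : ℕ}
    (e : Ext.{w} (G.obj Y) X n) :
    extHomOfExactRightAdjoint.{w', w} adj Y X' n (e.comp (Ext.mk₀ f) (add_zero n)) =
      (extHomOfExactRightAdjoint adj Y X n e).comp (Ext.mk₀ (F.map f)) (add_zero n) := by
  simp only [extHomOfExactRightAdjoint_apply, Ext.mapExactFunctor_comp, Ext.mapExactFunctor_mk₀,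
    Ext.comp_assoc_of_third_deg_zero]

lemma extHomOfExactRightAdjoint_mk₀_comp {Y Y' : D} (g : Y ⟶ Y') {X : C} {n : ℕ}
    (e : Ext.{w} (G.obj Y') X n) :
    extHomOfExactRightAdjoint.{w', w} adj Y X n ((Ext.mk₀ (G.map g)).comp e (zero_add n)) =
      (Ext.mk₀ g).comp (extHomOfExactRightAdjoint adj Y' X n e) (zero_add n) := by
  have unit_naturality : adj.unit.app Y ≫ F.map (G.map g) = g ≫ adj.unit.app Y' :=
    adj.unit_naturality g
  simp only [extHomOfExactRightAdjoint_apply, Ext.mapExactFunctor_comp, Ext.mapExactFunctor_mk₀,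
    Ext.mk₀_comp_mk₀_assoc, unit_naturality]

lemma mk₀_comp_mapExactFunctor_eq_zero_iff {X Z : C} {Y : D} (e : Ext.{w} Z X 1)
    (f : Y ⟶ F.obj Z) :
    (Ext.mk₀ f).comp (e.mapExactFunctor F : Ext.{w'} _ _ 1) (zero_add 1) = 0 ↔
      (Ext.mk₀ ((adj.homEquiv Y Z).symm f)).comp e (zero_add 1) = 0 := by
  obtain ⟨E, i, p, w, hS, rfl⟩ := exists_extClass_eq e
  rw [Ext.mapExactFunctor_extClass]
  have transpose (s : Y ⟶ F.obj E) :
      s ≫ F.map p = f ↔ (adj.homEquiv Y E).symm s ≫ p = (adj.homEquiv Y Z).symm f := by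
    rw [← adj.homEquiv_naturality_right_symm, EmbeddingLike.apply_eq_iff_eq]
  exact (mk₀_comp_extClass_eq_zero_iff (hS.map_of_exact F) f).trans <|
    ((adj.homEquiv Y E).symm.exists_congr transpose).trans
      (mk₀_comp_extClass_eq_zero_iff hS _).symm

lemma extHomOfExactRightAdjoint_injective (Y : D) (X : C) :
    Function.Injective (extHomOfExactRightAdjoint.{w', w} adj Y X 1) := by
  rw [injective_iff_map_eq_zero]
  intro e he
  have transpose_unit : (adj.homEquiv Y (G.obj Y)).symm (adj.unit.app Y) = 𝟙 _ := by
    simp [adj.homEquiv_counit]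
  rw [← Ext.mk₀_id_comp e, ← transpose_unit]
  exact (mk₀_comp_mapExactFunctor_eq_zero_iff adj e _).1 he

lemma extHomOfExactRightAdjoint_extClass_comp_mk₀ {S : ShortComplex D} (hS : S.ShortExact)
    {w : G.map S.f ≫ G.map S.g = 0} (hGS : (ShortComplex.mk _ _ w).ShortExact)
    {X : C} (f : G.obj S.X₁ ⟶ X) :
    extHomOfExactRightAdjoint.{w', w} adj S.X₃ X 1
        (hGS.extClass.comp (Ext.mk₀ f) (add_zero 1)) =
      hS.extClass.comp (Ext.mk₀ (adj.homEquiv _ _ f)) (add_zero 1) := by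
  let η : S ⟶ (ShortComplex.mk _ _ w).map F :=
    { τ₁ := adj.unit.app _
      τ₂ := adj.unit.app _
      τ₃ := adj.unit.app _
      comm₁₂ := adj.unit_naturality _
      comm₂₃ := adj.unit_naturality _ }
  have map_extClass : (Ext.mk₀ (adj.unit.app S.X₃)).comp
      (hGS.extClass.mapExactFunctor F) (zero_add 1) =
        hS.extClass.comp (Ext.mk₀ (adj.unit.app S.X₁)) (add_zero 1) := by
    rw [Ext.mapExactFunctor_extClass]
    exact (ShortComplex.ShortExact.extClass_naturality hS (hGS.map_of_exact F) η).symm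
  rw [extHomOfExactRightAdjoint_comp_mk₀, extHomOfExactRightAdjoint_apply, map_extClass,
    Ext.comp_assoc_of_third_deg_zero, Ext.mk₀_comp_mk₀, adj.homEquiv_unit]

lemma extHomOfExactRightAdjoint_surjective [G.PreservesZeroMorphisms] {Y : D} (X : C)
    (hY : ∀ {Z W : D} (i : Z ⟶ W) (p : W ⟶ Y) (w : i ≫ p = 0),
      (ShortComplex.mk i p w).ShortExact → ((ShortComplex.mk i p w).map G).ShortExact) :
    Function.Surjective (extHomOfExactRightAdjoint.{w', w} adj Y X 1) := by
  intro e
  obtain ⟨W, i, p, w, hS, rfl⟩ := exists_extClass_eq e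
  refine ⟨(hY i p w hS).extClass.comp (Ext.mk₀ ((adj.homEquiv _ X).symm (𝟙 _))) (add_zero 1), ?_⟩
  refine (extHomOfExactRightAdjoint_extClass_comp_mk₀ adj hS (hY i p w hS) _).trans ?_
  rw [Equiv.apply_symm_apply, Ext.comp_mk₀_id]

end ExactRightAdjoint

end Adjunction

section Complexes

open HomologicalComplex

variable {C : Type*} [Category* C] {ι : Type*} {c : ComplexShape ι}

section

variable [Preadditive C] [CategoryWithHomology C] {K L : HomologicalComplex C c} (f : K ⟶ L) (i : ι)

lemma epi_cyclesMap_of_epi_homologyMap [Epi (f.f (c.prev i))] [Epi (homologyMap f i)] :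
    Epi (cyclesMap f i) := by
  refine Preadditive.epi_of_cancel_zero _ fun k hk ↦ ?_
  have toCycles_naturality :
      K.toCycles (c.prev i) i ≫ cyclesMap f i = f.f (c.prev i) ≫ L.toCycles (c.prev i) i := by
    simp [← cancel_mono (L.iCycles i)]
  have toCycles_k : L.toCycles (c.prev i) i ≫ k = 0 := by
    rw [← cancel_epi (f.f (c.prev i)), ← reassoc_of% toCycles_naturality, hk, comp_zero, comp_zero]
  obtain ⟨k', rfl : L.homologyπ i ≫ k' = k⟩ :=
    CokernelCofork.IsColimit.desc' (L.homologyIsCokernel _ i rfl) k toCycles_k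
  have : k' = 0 := by
    rw [← cancel_epi (homologyMap f i), ← cancel_epi (K.homologyπ i), homologyπ_naturality_assoc,
      hk, comp_zero, comp_zero]
  rw [this, comp_zero]

lemma mono_opcyclesMap_of_mono_homologyMap [Mono (f.f (c.next i))] [Mono (homologyMap f i)] :
    Mono (opcyclesMap f i) := by
  refine Preadditive.mono_of_cancel_zero _ fun k hk ↦ ?_
  have fromOpcycles_naturality :
      opcyclesMap f i ≫ L.fromOpcycles i (c.next i) =
        K.fromOpcycles i (c.next i) ≫ f.f (c.next i) := by
    simp [← cancel_epi (K.pOpcycles i)]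
  have k_fromOpcycles : k ≫ K.fromOpcycles i (c.next i) = 0 := by
    rw [← cancel_mono (f.f (c.next i)), Category.assoc, ← fromOpcycles_naturality,
      reassoc_of% hk, zero_comp, zero_comp]
  obtain ⟨k', rfl : k' ≫ K.homologyι i = k⟩ :=
    KernelFork.IsLimit.lift' (K.homologyIsKernel i _ rfl) k k_fromOpcycles
  have : k' = 0 := by
    rw [← cancel_mono (homologyMap f i), ← cancel_mono (L.homologyι i), Category.assoc,
      Category.assoc, homologyι_naturality, ← Category.assoc, hk, zero_comp]
  rw [this, zero_comp]

end

section

variable [Abelian C] {S : ShortComplex (HomologicalComplex C c)} {i : ι}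

lemma epi_homologyMap_g_of_exactAt (hS : S.ShortExact) (h : ∀ j, c.Rel i j → S.X₁.ExactAt j) :
    Epi (homologyMap S.g i) := by
  by_cases hi : ∃ j, c.Rel i j
  · obtain ⟨j, hij⟩ := hi
    exact (hS.homology_exact₃ i j hij).epi_f ((h j hij).isZero_homology.eq_of_tgt _ _)
  · have := hS.epi_g
    exact epi_homologyMap_of_epi_of_not_rel S.g i fun j hij ↦ hi ⟨j, hij⟩

lemma mono_homologyMap_f_of_exactAt (hS : S.ShortExact) (h : ∀ j, c.Rel j i → S.X₃.ExactAt j) :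
    Mono (homologyMap S.f i) := by
  by_cases hi : ∃ j, c.Rel j i
  · obtain ⟨j, hji⟩ := hi
    exact (hS.homology_exact₁ j i hji).mono_g ((h j hji).isZero_homology.eq_of_src _ _)
  · have := hS.mono_f
    exact mono_homologyMap_of_mono_of_not_rel S.f i fun j hji ↦ hi ⟨j, hji⟩

lemma shortExact_map_cyclesFunctor (hS : S.ShortExact) (h : ∀ j, c.Rel i j → S.X₁.ExactAt j) :
    (S.map (cyclesFunctor C c i)).ShortExact := by
  have := hS.mono_f
  have := hS.epi_g
  have := epi_homologyMap_g_of_exactAt hS h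
  exact
    { exact := cycles_left_exact S hS.exact i
      mono_f := inferInstanceAs (Mono (cyclesMap S.f i))
      epi_g := epi_cyclesMap_of_epi_homologyMap S.g i }

lemma shortExact_map_opcyclesFunctor (hS : S.ShortExact) (h : ∀ j, c.Rel j i → S.X₃.ExactAt j) :
    (S.map (opcyclesFunctor C c i)).ShortExact := by
  have := hS.mono_f
  have := hS.epi_g
  have := mono_homologyMap_f_of_exactAt hS h
  exact
    { exact := opcycles_right_exact S hS.exact i
      mono_f := mono_opcyclesMap_of_mono_homologyMap S.f i
      epi_g := inferInstanceAs (Epi (opcyclesMap S.g i)) }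

end

section

variable [HasZeroMorphisms C] [HasZeroObject C] [CategoryWithHomology C] [DecidableEq ι] (n : ι)

/-- The morphism `Sⁿ(Zⁿ(Y)) ⟶ Y` induced by the inclusion of cycles. -/
noncomputable def singleCyclesTo (Y : HomologicalComplex C c) :
    (single C c n).obj (Y.cycles n) ⟶ Y :=
  mkHomFromSingle (Y.iCycles n) fun j _ ↦ Y.iCycles_d n j

/-- The morphism `Y ⟶ Sⁿ(Yⁿ/Bⁿ(Y))` induced by the projection to opcycles. -/
noncomputable def toSingleOpcycles (Y : HomologicalComplex C c) :
    Y ⟶ (single C c n).obj (Y.opcycles n) :=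
  mkHomToSingle (Y.pOpcycles n) fun j _ ↦ Y.d_pOpcycles j n

lemma singleCyclesTo_naturality {Y Y' : HomologicalComplex C c} (g : Y ⟶ Y') :
    (single C c n).map (cyclesMap g n) ≫ singleCyclesTo n Y' = singleCyclesTo n Y ≫ g := by
  apply from_single_hom_ext
  simp [singleCyclesTo, single_map_f_self]

lemma toSingleOpcycles_naturality {Y Y' : HomologicalComplex C c} (g : Y ⟶ Y') :
    g ≫ toSingleOpcycles n Y' = toSingleOpcycles n Y ≫ (single C c n).map (opcyclesMap g n) := by
  apply to_single_hom_ext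
  simp [toSingleOpcycles, single_map_f_self]

lemma single_map_inv_comp_singleCyclesTo (X : C) :
    (single C c n).map (singleObjCyclesSelfIso c n X).inv ≫
      singleCyclesTo n ((single C c n).obj X) = 𝟙 _ := by
  apply from_single_hom_ext
  simp [singleCyclesTo, single_map_f_self]

lemma toSingleOpcycles_comp_single_map_inv (X : C) :
    toSingleOpcycles n ((single C c n).obj X) ≫
      (single C c n).map (singleObjOpcyclesSelfIso c n X).inv = 𝟙 _ := by
  apply to_single_hom_ext
  simp [toSingleOpcycles, single_map_f_self]

lemma inv_comp_cyclesMap_singleCyclesTo (Y : HomologicalComplex C c) :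
    (singleObjCyclesSelfIso c n (Y.cycles n)).inv ≫ cyclesMap (singleCyclesTo n Y) n = 𝟙 _ := by
  simp [← cancel_mono (Y.iCycles n), singleCyclesTo]

lemma opcyclesMap_toSingleOpcycles_comp_inv (Y : HomologicalComplex C c) :
    opcyclesMap (toSingleOpcycles n Y) n ≫ (singleObjOpcyclesSelfIso c n (Y.opcycles n)).inv =
      𝟙 _ := by
  simp [← cancel_epi (Y.pOpcycles n), toSingleOpcycles]

variable (C c)

/-- The functor `Sⁿ` is left adjoint to `Zⁿ`. -/
noncomputable def singleAdjCycles : single C c n ⊣ cyclesFunctor C c n where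
  unit :=
    { app X := (singleObjCyclesSelfIso c n X).inv
      naturality _ _ f := singleObjCyclesSelfIso_inv_naturality c n f |>.symm }
  counit :=
    { app Y := singleCyclesTo n Y
      naturality _ _ g := singleCyclesTo_naturality n g }
  left_triangle_components X := single_map_inv_comp_singleCyclesTo n X
  right_triangle_components Y := inv_comp_cyclesMap_singleCyclesTo n Y

/-- The functor `Sⁿ` is right adjoint to `Y ↦ Yⁿ/Bⁿ(Y)`. -/
noncomputable def opcyclesAdjSingle : opcyclesFunctor C c n ⊣ single C c n where
  unit :=
    { app Y := toSingleOpcycles n Y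
      naturality _ _ g := toSingleOpcycles_naturality n g }
  counit :=
    { app X := (singleObjOpcyclesSelfIso c n X).inv
      naturality _ _ f := singleObjOpcyclesSelfIso_inv_naturality c n f }
  left_triangle_components Y := opcyclesMap_toSingleOpcycles_comp_inv n Y
  right_triangle_components X := toSingleOpcycles_comp_single_map_inv n X

end
end Complexes

section SingleComplex

open HomologicalComplex

theorem stmt_12_general {ι : Type*} [DecidableEq ι] (c : ComplexShape ι)
    [HasExt.{w} 𝒜] [HasExt.{w'} (HomologicalComplex 𝒜 c)] :
    ∃ (Φ : ∀ (X : 𝒜) (n : ι) (Y : HomologicalComplex 𝒜 c),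
        Ext X (Y.cycles n) 1 →+ Ext ((single 𝒜 c n).obj X) Y 1)
      (Ψ : ∀ (X : 𝒜) (n : ι) (Y : HomologicalComplex 𝒜 c),
        Ext (Y.opcycles n) X 1 →+ Ext Y ((single 𝒜 c n).obj X) 1),
      (∀ X n Y, Function.Injective (Φ X n Y)) ∧
      (∀ X n Y, Function.Injective (Ψ X n Y)) ∧
      (∀ (X X' : 𝒜) (f : X ⟶ X') (n : ι) (Y : HomologicalComplex 𝒜 c)
        (e : Ext X' (Y.cycles n) 1),
        Φ X n Y ((Ext.mk₀ f).comp e (zero_add 1)) =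
          (Ext.mk₀ ((single 𝒜 c n).map f)).comp (Φ X' n Y e) (zero_add 1)) ∧
      (∀ (X : 𝒜) (n : ι) (Y Y' : HomologicalComplex 𝒜 c) (g : Y ⟶ Y')
        (e : Ext X (Y.cycles n) 1),
        Φ X n Y' (e.comp (Ext.mk₀ (cyclesMap g n)) (add_zero 1)) =
          (Φ X n Y e).comp (Ext.mk₀ g) (add_zero 1)) ∧
      (∀ (X X' : 𝒜) (f : X ⟶ X') (n : ι) (Y : HomologicalComplex 𝒜 c)
        (e : Ext (Y.opcycles n) X 1),
        Ψ X' n Y (e.comp (Ext.mk₀ f) (add_zero 1)) =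
          (Ψ X n Y e).comp (Ext.mk₀ ((single 𝒜 c n).map f)) (add_zero 1)) ∧
      (∀ (X : 𝒜) (n : ι) (Y Y' : HomologicalComplex 𝒜 c) (g : Y ⟶ Y')
        (e : Ext (Y'.opcycles n) X 1),
        Ψ X n Y ((Ext.mk₀ (opcyclesMap g n)).comp e (zero_add 1)) =
          (Ext.mk₀ g).comp (Ψ X n Y' e) (zero_add 1)) ∧
      (∀ (X : 𝒜) (n : ι) (Y : HomologicalComplex 𝒜 c), (∀ j, c.Rel n j → Y.ExactAt j) →
        Function.Bijective (Φ X n Y)) ∧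
      (∀ (X : 𝒜) (n : ι) (Y : HomologicalComplex 𝒜 c), (∀ j, c.Rel j n → Y.ExactAt j) →
        Function.Bijective (Ψ X n Y)) := by
  let adjΦ (n : ι) := singleAdjCycles 𝒜 c n
  let adjΨ (n : ι) := opcyclesAdjSingle 𝒜 c n
  refine ⟨fun X n Y ↦ extHomOfExactLeftAdjoint (adjΦ n) X Y 1,
    fun X n Y ↦ extHomOfExactRightAdjoint (adjΨ n) Y X 1,
    fun X n Y ↦ extHomOfExactLeftAdjoint_injective (adjΦ n) X Y,
    fun X n Y ↦ extHomOfExactRightAdjoint_injective (adjΨ n) Y X,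
    fun _ _ f n _ ↦ extHomOfExactLeftAdjoint_mk₀_comp (adjΦ n) f,
    fun _ n _ _ g ↦ extHomOfExactLeftAdjoint_comp_mk₀ (adjΦ n) g,
    fun _ _ f n _ ↦ extHomOfExactRightAdjoint_comp_mk₀ (adjΨ n) f,
    fun _ n _ _ g ↦ extHomOfExactRightAdjoint_mk₀_comp (adjΨ n) g,
    fun X n Y hY ↦ ⟨extHomOfExactLeftAdjoint_injective (adjΦ n) X Y,
      extHomOfExactLeftAdjoint_surjective (adjΦ n) X fun _ _ _ hS ↦
        shortExact_map_cyclesFunctor hS hY⟩,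
    fun X n Y hY ↦ ⟨extHomOfExactRightAdjoint_injective (adjΨ n) Y X,
      extHomOfExactRightAdjoint_surjective (adjΨ n) X fun _ _ _ hS ↦
        shortExact_map_opcyclesFunctor hS hY⟩⟩

end SingleComplex

/-- Let `𝒜` be an abelian category.  For `X : 𝒜`, `n : ℤ` and a cochain complex `Y`
there are injective homomorphisms of abelian groups
`Ext¹(X, Zⁿ(Y)) → Ext¹(Sⁿ(X), Y)` and `Ext¹(Yⁿ/Bⁿ(Y), X) → Ext¹(Y, Sⁿ(X))`,
natural in `X` and `Y`; if `Y` is acyclic, both are isomorphisms. -/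
theorem stmt_12 [HasExt.{w} 𝒜] [HasExt.{w'} (CochainComplex 𝒜 ℤ)] :
    ∃ (Φ : ∀ (X : 𝒜) (n : ℤ) (Y : CochainComplex 𝒜 ℤ),
        Abelian.Ext X (Y.cycles n) 1 →+ Abelian.Ext (sph n X) Y 1)
      (Ψ : ∀ (X : 𝒜) (n : ℤ) (Y : CochainComplex 𝒜 ℤ),
        Abelian.Ext (Y.opcycles n) X 1 →+ Abelian.Ext Y (sph n X) 1),
      (∀ X n Y, Function.Injective (Φ X n Y)) ∧
      (∀ X n Y, Function.Injective (Ψ X n Y)) ∧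
      -- naturality of `Φ` in the variable `X` (contravariant)
      (∀ (X X' : 𝒜) (f : X ⟶ X') (n : ℤ) (Y : CochainComplex 𝒜 ℤ)
        (e : Abelian.Ext X' (Y.cycles n) 1),
        Φ X n Y ((Abelian.Ext.mk₀ f).comp e (zero_add 1)) =
          (Abelian.Ext.mk₀ (sphMap n f)).comp (Φ X' n Y e) (zero_add 1)) ∧
      -- naturality of `Φ` in the variable `Y` (covariant)
      (∀ (X : 𝒜) (n : ℤ) (Y Y' : CochainComplex 𝒜 ℤ) (g : Y ⟶ Y')
        (e : Abelian.Ext X (Y.cycles n) 1),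
        Φ X n Y' (e.comp (Abelian.Ext.mk₀ (HomologicalComplex.cyclesMap g n))
            (add_zero 1)) =
          (Φ X n Y e).comp (Abelian.Ext.mk₀ g) (add_zero 1)) ∧
      -- naturality of `Ψ` in the variable `X` (covariant)
      (∀ (X X' : 𝒜) (f : X ⟶ X') (n : ℤ) (Y : CochainComplex 𝒜 ℤ)
        (e : Abelian.Ext (Y.opcycles n) X 1),
        Ψ X' n Y (e.comp (Abelian.Ext.mk₀ f) (add_zero 1)) =
          (Ψ X n Y e).comp (Abelian.Ext.mk₀ (sphMap n f)) (add_zero 1)) ∧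
      -- naturality of `Ψ` in the variable `Y` (contravariant)
      (∀ (X : 𝒜) (n : ℤ) (Y Y' : CochainComplex 𝒜 ℤ) (g : Y ⟶ Y')
        (e : Abelian.Ext (Y'.opcycles n) X 1),
        Ψ X n Y ((Abelian.Ext.mk₀ (HomologicalComplex.opcyclesMap g n)).comp e
            (zero_add 1)) =
          (Abelian.Ext.mk₀ g).comp (Ψ X n Y' e) (zero_add 1)) ∧
      -- for acyclic `Y`, both maps are isomorphisms
      (∀ (X : 𝒜) (n : ℤ) (Y : CochainComplex 𝒜 ℤ), (∀ m : ℤ, Y.ExactAt m) →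
        Function.Bijective (Φ X n Y) ∧ Function.Bijective (Ψ X n Y)) := by
  obtain ⟨Φ, Ψ, hΦ, hΨ, hΦX, hΦY, hΨX, hΨY, bijΦ, bijΨ⟩ := stmt_12_general (𝒜 := 𝒜) (.up ℤ)
  exact ⟨Φ, Ψ, hΦ, hΨ, hΦX, hΦY, hΨX, hΨY, fun X n Y hY ↦
    ⟨bijΦ X n Y fun j _ ↦ hY j, bijΨ X n Y fun j _ ↦ hY j⟩⟩
end
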